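/- arXiv:1010.3492 — 2 statements merged into one kernel-verified Lean document; each statement's English description precedes it below -/
import Mathlib

section
/- Let a, b be real parameters and let π′ be the bivector on ℝ⁴ (coordinates (φ,θ,p_φ,p_θ)) defined by {φ,p_φ}_{π′} = φ, {θ,p_θ}_{π′} = θ, and all other coordinate brackets zero. Then: (i) π′ is a Poisson bivector compatible with the canonical bivector P; (ii) the Lagrange top integrals H₁ = (a + cos²θ/sin²θ) p_φ² + p_θ² + b cos θ (which equals J₁² + J₂² + aJ₃² + b x₃ in the spherical realization) and H₂ = p_φ² (which equals J₃²) satisfy both {H₁,H₂}_P = 0 and {H₁,H₂}_{π′} = 0 on the set where sin θ ≠ 0. -/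
open Real

/-- Partial derivative in the `i`-th coordinate direction on `ℝ⁴`
(coordinates `z 0 = φ`, `z 1 = θ`, `z 2 = p_φ`, `z 3 = p_θ`). -/
noncomputable def pd (i : Fin 4) (F : (Fin 4 → ℝ) → ℝ) (z : Fin 4 → ℝ) : ℝ :=
  fderiv ℝ F z (Pi.single i 1)

/-- The Poisson bracket of `F` and `G` defined by a bivector `π`. -/
noncomputable def pbiv (Pv : (Fin 4 → ℝ) → Matrix (Fin 4) (Fin 4) ℝ)
    (F G : (Fin 4 → ℝ) → ℝ) (z : Fin 4 → ℝ) : ℝ :=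
  ∑ i : Fin 4, ∑ j : Fin 4, Pv z i j * pd i F z * pd j G z

/-- A bivector `π` satisfies the Jacobi identity (is a Poisson bivector) on `U`. -/
def IsPoissonOn (Pv : (Fin 4 → ℝ) → Matrix (Fin 4) (Fin 4) ℝ)
    (U : Set (Fin 4 → ℝ)) : Prop :=
  ∀ z ∈ U, ∀ i j k : Fin 4,
    (∑ l : Fin 4, (Pv z l i * pd l (fun w => Pv w j k) z
      + Pv z l j * pd l (fun w => Pv w k i) z
      + Pv z l k * pd l (fun w => Pv w i j) z)) = 0

/-- The antisymmetric matrix with the given upper-triangular entries: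
`a = {φ,θ}`, `b = {φ,p_φ}`, `c = {φ,p_θ}`, `d = {θ,p_φ}`, `e = {θ,p_θ}`, `f = {p_φ,p_θ}`. -/
noncomputable def skew (a b c d e f : ℝ) : Matrix (Fin 4) (Fin 4) ℝ :=
  !![0, a, b, c; -a, 0, d, e; -b, -d, 0, f; -c, -e, -f, 0]

/-- The canonical Poisson bivector: `{φ,p_φ} = {θ,p_θ} = 1`, all other brackets zero. -/
noncomputable def Pcan : Matrix (Fin 4) (Fin 4) ℝ :=
  !![0, 0, 1, 0; 0, 0, 0, 1; -1, 0, 0, 0; 0, -1, 0, 0]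

/-- The canonical Poisson bracket on functions of `(φ, θ, p_φ, p_θ)`. -/
noncomputable def pb (F G : (Fin 4 → ℝ) → ℝ) (z : Fin 4 → ℝ) : ℝ :=
  pd 0 F z * pd 2 G z - pd 2 F z * pd 0 G z + pd 1 F z * pd 3 G z - pd 3 F z * pd 1 G z

noncomputable def x3 (z : Fin 4 → ℝ) : ℝ := cos (z 1)
noncomputable def J1 (z : Fin 4 → ℝ) : ℝ := sin (z 0) * cos (z 1) / sin (z 1) * z 2 - cos (z 0) * z 3
noncomputable def J2 (z : Fin 4 → ℝ) : ℝ := cos (z 0) * cos (z 1) / sin (z 1) * z 2 + sin (z 0) * z 3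
noncomputable def J3 (z : Fin 4 → ℝ) : ℝ := -(z 2)

/-- The bivector `π′` of the Lagrange top: `{φ,p_φ} = φ`, `{θ,p_θ} = θ`,
all other coordinate brackets zero. -/
noncomputable def piLag (z : Fin 4 → ℝ) : Matrix (Fin 4) (Fin 4) ℝ :=
  skew 0 (z 0) 0 0 (z 1) 0

theorem pd_eq_zero (i : Fin 4) (F : (Fin 4 → ℝ) → ℝ) (z : Fin 4 → ℝ)
    (h : ∀ t : ℝ, F (z + t • Pi.single i 1) = F z) : pd i F z = 0 := by
  unfold pd
  by_cases hd : DifferentiableAt ℝ F z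
  · rw [← hd.lineDeriv_eq_fderiv]
    simp [lineDeriv, h]
  · simp [fderiv_zero_of_not_differentiableAt hd]

theorem pd_const (i : Fin 4) (c : ℝ) (z : Fin 4 → ℝ) : pd i (fun _ => c) z = 0 :=
  pd_eq_zero i _ z (fun _ => rfl)

theorem pd_coord (i j : Fin 4) (z : Fin 4 → ℝ) :
    pd i (fun w => w j) z = (Pi.single i 1 : Fin 4 → ℝ) j := by
  unfold pd
  have h : HasFDerivAt (fun w : Fin 4 → ℝ => w j)
      (ContinuousLinearMap.proj (R := ℝ) (φ := fun _ : Fin 4 => ℝ) j) z := hasFDerivAt_apply j z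
  rw [h.fderiv]; rfl

theorem pd_neg (i : Fin 4) (F : (Fin 4 → ℝ) → ℝ) (z : Fin 4 → ℝ) :
    pd i (fun w => -F w) z = -pd i F z := by
  unfold pd
  rw [fderiv_fun_neg]; rfl

theorem pd_const_add (i : Fin 4) (c : ℝ) (F : (Fin 4 → ℝ) → ℝ) (z : Fin 4 → ℝ) :
    pd i (fun w => c + F w) z = pd i F z := by
  unfold pd
  rw [fderiv_const_add]

theorem statement5 (a b : ℝ) :
    IsPoissonOn piLag Set.univ ∧
    IsPoissonOn (fun z => Pcan + piLag z) Set.univ ∧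
    ∀ z : Fin 4 → ℝ, sin (z 1) ≠ 0 →
      ((a + cos (z 1) ^ 2 / sin (z 1) ^ 2) * z 2 ^ 2 + z 3 ^ 2 + b * cos (z 1)
          = J1 z ^ 2 + J2 z ^ 2 + a * J3 z ^ 2 + b * x3 z) ∧
      (z 2 ^ 2 = J3 z ^ 2) ∧
      pb (fun w => (a + cos (w 1) ^ 2 / sin (w 1) ^ 2) * w 2 ^ 2 + w 3 ^ 2 + b * cos (w 1))
        (fun w => w 2 ^ 2) z = 0 ∧
      pbiv piLag (fun w => (a + cos (w 1) ^ 2 / sin (w 1) ^ 2) * w 2 ^ 2 + w 3 ^ 2 + b * cos (w 1))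
        (fun w => w 2 ^ 2) z = 0 := by
  refine ⟨?_, ?_, ?_⟩
  · intro z _ i j k
    fin_cases i <;> fin_cases j <;> fin_cases k <;>
      simp [Fin.sum_univ_four, piLag, skew, pd_const, pd_coord, pd_neg]
  · intro z _ i j k
    fin_cases i <;> fin_cases j <;> fin_cases k <;>
      simp [Fin.sum_univ_four, piLag, skew, Pcan, pd_const, pd_coord, pd_neg, pd_const_add]
  · intro z hz
    have hF : pd 0 (fun w => (a + cos (w 1) ^ 2 / sin (w 1) ^ 2) * w 2 ^ 2 + w 3 ^ 2
        + b * cos (w 1)) z = 0 := pd_eq_zero _ _ _ (fun t => by simp)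
    have h0 : pd 0 (fun w => w 2 ^ 2) z = 0 := pd_eq_zero _ _ _ (fun t => by simp)
    have h1 : pd 1 (fun w => w 2 ^ 2) z = 0 := pd_eq_zero _ _ _ (fun t => by simp)
    have h3 : pd 3 (fun w => w 2 ^ 2) z = 0 := pd_eq_zero _ _ _ (fun t => by simp)
    refine ⟨?_, ?_, ?_, ?_⟩
    · unfold J1 J2 J3 x3
      have hs := sin_sq_add_cos_sq (z 0)
      linear_combination
        (-(cos (z 1) ^ 2 / sin (z 1) ^ 2 * z 2 ^ 2) - z 3 ^ 2) * hs
    · simp [J3]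
    · simp only [pb, hF, h0, h1, h3]; ring
    · simp [pbiv, Fin.sum_univ_four, piLag, skew, hF, h0, h1, h3]
end

section
/- Let a ≥ 0 and b, c ∈ ℝ, and let x_i, J_i be the spherical realization on the domain where sin θ ≠ 0 and cos θ ≠ 0 (so J₁² + J₂² + J₃² + a/x₃² = p_θ² + p_φ²/sin²θ + a/cos²θ ≥ 0). Define the Sokolov system integrals Ĥ₁ = J₁² + J₂² + 2J₃² + c J₃ + b (J₃ x₁ − x₃ J₁) + a/x₃² and Ĥ₂ = (2J₃ + c + b x₁)·√(J₁² + J₂² + J₃² + a/x₃²). Then {Ĥ₁, Ĥ₂} = 0 with respect to the canonical Poisson bracket. -/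
open Real

noncomputable def x1 (z : Fin 4 → ℝ) : ℝ := sin (z 0) * sin (z 1)
/-- A partial derivative is the derivative along the coordinate line. -/
lemma pd_eq (i : Fin 4) (F : (Fin 4 → ℝ) → ℝ) (z : Fin 4 → ℝ) (d : ℝ)
    (hF : DifferentiableAt ℝ F z)
    (h : HasDerivAt (fun t => F (Function.update z i t)) d (z i)) : pd i F z = d := by
  have h1 : HasDerivAt (fun t => F (Function.update z i t)) (pd i F z) (z i) := by
    have h2 : HasFDerivAt F (fderiv ℝ F z) (Function.update z i (z i)) := by
      rw [Function.update_eq_self]; exact hF.hasFDerivAt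
    exact h2.comp_hasDerivAt (z i) (hasDerivAt_update z i (z i))
  exact h1.unique h

/-- If `F` vanishes along a coordinate line then the partial derivative vanishes. -/
lemma pd_zero (i : Fin 4) (F : (Fin 4 → ℝ) → ℝ) (z : Fin 4 → ℝ)
    (h : ∀ t, F (Function.update z i t) = 0) : pd i F z = 0 := by
  by_cases hF : DifferentiableAt ℝ F z
  · apply pd_eq i F z 0 hF
    simp only [h]
    exact hasDerivAt_const _ _
  · simp [pd, fderiv_zero_of_not_differentiableAt hF]

noncomputable def KK (a : ℝ) (w : Fin 4 → ℝ) : ℝ :=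
  (cos (w 1) / sin (w 1)) ^ 2 * w 2 ^ 2 + w 3 ^ 2 + w 2 ^ 2 + a / cos (w 1) ^ 2

noncomputable def LL (b c : ℝ) (w : Fin 4 → ℝ) : ℝ :=
  w 2 ^ 2 - c * w 2 + b * (-(w 2) * (sin (w 0) * sin (w 1))
    - cos (w 1) * (sin (w 0) * (cos (w 1) / sin (w 1)) * w 2 - cos (w 0) * w 3))

noncomputable def ff (b c : ℝ) (w : Fin 4 → ℝ) : ℝ :=
  -2 * w 2 + c + b * (sin (w 0) * sin (w 1))

lemma JJ (w : Fin 4 → ℝ) :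
    J1 w ^ 2 + J2 w ^ 2 = (cos (w 1) / sin (w 1)) ^ 2 * w 2 ^ 2 + w 3 ^ 2 := by
  unfold J1 J2
  have h := sin_sq_add_cos_sq (w 0)
  linear_combination ((cos (w 1) / sin (w 1)) ^ 2 * w 2 ^ 2 + w 3 ^ 2) * h

lemma dcot (t : ℝ) (hs : sin t ≠ 0) :
    HasDerivAt (fun t => cos t / sin t) (-1 / sin t ^ 2) t := by
  refine ((hasDerivAt_cos t).div (hasDerivAt_sin t) hs).congr_deriv ?_
  refine congrArg (fun x : ℝ => x / sin t ^ 2) ?_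
  linear_combination -sin_sq_add_cos_sq t

section
variable (a b c : ℝ) (z : Fin 4 → ℝ)

lemma dK (hs : sin (z 1) ≠ 0) (hc : cos (z 1) ≠ 0) : DifferentiableAt ℝ (KK a) z := by
  unfold KK
  have : cos (z 1) ^ 2 ≠ 0 := pow_ne_zero _ hc
  fun_prop (disch := assumption)

lemma dL (hs : sin (z 1) ≠ 0) : DifferentiableAt ℝ (LL b c) z := by
  unfold LL
  fun_prop (disch := assumption)

lemma df : DifferentiableAt ℝ (ff b c) z := by
  unfold ff
  fun_prop

lemma pK0 (hs : sin (z 1) ≠ 0) (hc : cos (z 1) ≠ 0) : pd 0 (KK a) z = 0 := by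
  apply pd_eq _ _ _ _ (dK a z hs hc)
  simp [KK, Function.update, hasDerivAt_const]

lemma pK1 (hs : sin (z 1) ≠ 0) (hc : cos (z 1) ≠ 0) : pd 1 (KK a) z =
    2 * (cos (z 1) / sin (z 1)) * (-1 / sin (z 1) ^ 2) * z 2 ^ 2
      + 2 * a * sin (z 1) / cos (z 1) ^ 3 := by
  apply pd_eq _ _ _ _ (dK a z hs hc)
  simp [KK, Function.update]
  have h := (((((dcot (z 1) hs).pow 2).mul_const (z 2 ^ 2)).add_const (z 3 ^ 2)).add_const
    (z 2 ^ 2)).add ((hasDerivAt_const (z 1) a).div ((hasDerivAt_cos (z 1)).pow 2) (pow_ne_zero _ hc))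
  refine h.congr_deriv ?_
  simp
  field_simp
  try ring

lemma pK2 (hs : sin (z 1) ≠ 0) (hc : cos (z 1) ≠ 0) : pd 2 (KK a) z =
    2 * (cos (z 1) / sin (z 1)) ^ 2 * z 2 + 2 * z 2 := by
  apply pd_eq _ _ _ _ (dK a z hs hc)
  simp only [KK, Function.update]
  simp
  have h := (((hasDerivAt_pow 2 (z 2)).const_mul ((cos (z 1) / sin (z 1)) ^ 2)).add_const
    (z 3 ^ 2)).add (hasDerivAt_pow 2 (z 2))
  refine h.congr_deriv ?_
  simp
  ring

lemma pK3 (hs : sin (z 1) ≠ 0) (hc : cos (z 1) ≠ 0) : pd 3 (KK a) z = 2 * z 3 := by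
  apply pd_eq _ _ _ _ (dK a z hs hc)
  simp only [KK, Function.update]
  simp
  have h := hasDerivAt_pow 2 (z 3)
  refine h.congr_deriv ?_
  simp

lemma pf0 : pd 0 (ff b c) z = b * (cos (z 0) * sin (z 1)) := by
  apply pd_eq _ _ _ _ (df b c z)
  simp only [ff, Function.update]
  simp
  exact ((hasDerivAt_sin (z 0)).mul_const (sin (z 1))).const_mul b

lemma pf1 : pd 1 (ff b c) z = b * (sin (z 0) * cos (z 1)) := by
  apply pd_eq _ _ _ _ (df b c z)
  simp only [ff, Function.update]
  simp
  exact ((hasDerivAt_sin (z 1)).const_mul (sin (z 0))).const_mul b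

lemma pf2 : pd 2 (ff b c) z = -2 := by
  apply pd_eq _ _ _ _ (df b c z)
  simp only [ff, Function.update]
  simp
  simpa using ((hasDerivAt_id' (z 2)).const_mul 2).fun_neg

lemma pf3 : pd 3 (ff b c) z = 0 := by
  apply pd_eq _ _ _ _ (df b c z)
  simp [ff, Function.update, hasDerivAt_const]

lemma pL0 (hs : sin (z 1) ≠ 0) : pd 0 (LL b c) z =
    b * (-(z 2) * (cos (z 0) * sin (z 1))
    - cos (z 1) * (cos (z 0) * (cos (z 1) / sin (z 1)) * z 2 + sin (z 0) * z 3)) := by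
  apply pd_eq _ _ _ _ (dL b c z hs)
  simp only [LL, Function.update]
  simp
  have hS := hasDerivAt_sin (z 0)
  have hC := hasDerivAt_cos (z 0)
  have h := ((((hS.mul_const (sin (z 1))).const_mul (z 2)).neg.sub
    ((((hS.mul_const (cos (z 1) / sin (z 1))).mul_const (z 2)).sub
      (hC.mul_const (z 3))).const_mul (cos (z 1)))).const_mul b)
  refine (h.congr_deriv ?_)
  ring

lemma pL1 (hs : sin (z 1) ≠ 0) : pd 1 (LL b c) z =
    b * (-(z 2) * (sin (z 0) * cos (z 1))
    + sin (z 1) * (sin (z 0) * (cos (z 1) / sin (z 1)) * z 2 - cos (z 0) * z 3)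
    + cos (z 1) * sin (z 0) * z 2 / sin (z 1) ^ 2) := by
  apply pd_eq _ _ _ _ (dL b c z hs)
  simp only [LL, Function.update]
  simp
  have hS := hasDerivAt_sin (z 1)
  have hC := hasDerivAt_cos (z 1)
  have h := ((((hS.const_mul (sin (z 0))).const_mul (z 2)).neg.sub
    (hC.mul ((((dcot (z 1) hs).const_mul (sin (z 0))).mul_const (z 2)).sub_const
      (cos (z 0) * z 3)))).const_mul b)
  refine (h.congr_deriv ?_)
  ring

lemma pL2 (hs : sin (z 1) ≠ 0) : pd 2 (LL b c) z =
    2 * z 2 - c + b * (-(sin (z 0) * sin (z 1))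
    - cos (z 1) * (sin (z 0) * (cos (z 1) / sin (z 1)))) := by
  apply pd_eq _ _ _ _ (dL b c z hs)
  simp only [LL, Function.update]
  simp
  have hi := hasDerivAt_id' (z 2)
  have h := ((hasDerivAt_pow 2 (z 2)).sub (hi.const_mul c)).add
    (((hi.mul_const (sin (z 0) * sin (z 1))).neg.sub
    (((hi.const_mul (sin (z 0) * (cos (z 1) / sin (z 1)))).sub_const
      (cos (z 0) * z 3)).const_mul (cos (z 1)))).const_mul b)
  refine (h.congr_deriv ?_)
  simp

lemma pL3 (hs : sin (z 1) ≠ 0) : pd 3 (LL b c) z = b * (cos (z 1) * cos (z 0)) := by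
  apply pd_eq _ _ _ _ (dL b c z hs)
  simp only [LL, Function.update]
  simp
  have hi := hasDerivAt_id' (z 3)
  have h := (((((hi.const_mul (cos (z 0))).const_sub
      (sin (z 0) * (cos (z 1) / sin (z 1)) * z 2)).const_mul (cos (z 1))).const_sub
      (-(z 2 * (sin (z 0) * sin (z 1))))).const_mul b)
  refine (h.congr_deriv ?_)
  simp

lemma pdF (hs : sin (z 1) ≠ 0) (hc : cos (z 1) ≠ 0) (i : Fin 4) :
    pd i (fun w => KK a w + LL b c w) z = pd i (KK a) z + pd i (LL b c) z := by
  unfold pd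
  rw [fderiv_fun_add (dK a z hs hc) (dL b c z hs)]
  rfl

lemma pdG (hs : sin (z 1) ≠ 0) (hc : cos (z 1) ≠ 0) (hK : KK a z ≠ 0) (i : Fin 4) :
    pd i (fun w => ff b c w * √(KK a w)) z =
      pd i (ff b c) z * √(KK a z) + ff b c z * (pd i (KK a) z / (2 * √(KK a z))) := by
  unfold pd
  rw [((df b c z).hasFDerivAt.fun_mul ((dK a z hs hc).hasFDerivAt.sqrt hK)).fderiv]
  simp
  ring

lemma alg (S C s k p q r : ℝ) (hs : s ≠ 0) (hc : k ≠ 0) (hr : r ≠ 0)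
    (h1 : s ^ 2 + k ^ 2 = 1) 
    (hK : r ^ 2 = (k / s) ^ 2 * p ^ 2 + q ^ 2 + p ^ 2 + a / k ^ 2) 
    (f K1 K2 K3 L0 L1 L2 L3 : ℝ) (hf : f = -2 * p + c + b * (S * s))
    (hK1 : K1 = 2 * (k / s) * (-1 / s ^ 2) * p ^ 2 + 2 * a * s / k ^ 3)
    (hK2 : K2 = 2 * (k / s) ^ 2 * p + 2 * p) (hK3 : K3 = 2 * q)
    (hL0 : L0 = b * (-p * (C * s) - k * (C * (k / s) * p + S * q)))
    (hL1 : L1 = b * (-p * (S * k) + s * (S * (k / s) * p - C * q) + k * S * p / s ^ 2))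
    (hL2 : L2 = 2 * p - c + b * (-(S * s) - k * (S * (k / s))))
    (hL3 : L3 = b * (k * C)) :
    (0 + L0) * (-2 * r + f * (K2 / (2 * r))) - (K2 + L2) * (b * (C * s) * r + f * (0 / (2 * r)))
    + (K1 + L1) * (0 * r + f * (K3 / (2 * r)))
    - (K3 + L3) * (b * (S * k) * r + f * (K1 / (2 * r))) = 0 := by
  have key : 2 * r ^ 2 * (-2 * L0 - (K2 + L2) * (b * (C * s)) - (K3 + L3) * (b * (S * k)))
      + f * (L0 * K2 + L1 * K3 - L3 * K1) = 0 := by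
    have hk2 : k ^ 2 = 1 - s ^ 2 := by linarith
    have e2 : K2 = 2 * p / s ^ 2 := by
      rw [hK2, div_pow, hk2]; field_simp; ring
    have e0 : L0 = b * (-p * C / s - k * S * q) := by
      rw [hL0]; field_simp; linear_combination (-b * C * p) * h1
    have e4 : L2 = 2 * p - c - b * S / s := by
      rw [hL2]; field_simp; linear_combination (-b * S) * h1
    have e1 : L1 = b * (-s * C * q + k * S * p / s ^ 2) := by
      rw [hL1]; field_simp; ring
    have eR : r ^ 2 = p ^ 2 / s ^ 2 + q ^ 2 + a / k ^ 2 := by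
      rw [hK, div_pow, hk2]; field_simp; ring
    have eX : -2 * L0 - (K2 + L2) * (b * (C * s)) - (K3 + L3) * (b * (S * k)) = b * C * s * f := by
      rw [e2, e0, e4, hK3, hL3, hf]; field_simp
      linear_combination (-b * S * C * b * s) * h1
    have eY : L0 * K2 + L1 * K3 - L3 * K1 = -2 * r ^ 2 * (b * C * s) := by
      rw [e2, e0, e1, hK3, hL3, hK1, eR]; field_simp
      linear_combination (b * C * p ^ 2 * k ^ 2) * h1
    rw [eX, eY]; ring
  field_simp
  linear_combination key

end

theorem statement15 (a b c : ℝ) (ha : 0 ≤ a) (z : Fin 4 → ℝ)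
    (hs : sin (z 1) ≠ 0) (hc : cos (z 1) ≠ 0) :
    pb (fun w => J1 w ^ 2 + J2 w ^ 2 + 2 * J3 w ^ 2 + c * J3 w
        + b * (J3 w * x1 w - x3 w * J1 w) + a / x3 w ^ 2)
      (fun w => (2 * J3 w + c + b * x1 w)
        * Real.sqrt (J1 w ^ 2 + J2 w ^ 2 + J3 w ^ 2 + a / x3 w ^ 2)) z = 0 := by
  have hF : (fun w => J1 w ^ 2 + J2 w ^ 2 + 2 * J3 w ^ 2 + c * J3 w
        + b * (J3 w * x1 w - x3 w * J1 w) + a / x3 w ^ 2) = fun w => KK a w + LL b c w := by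
    funext w
    rw [JJ]
    unfold J1 J3 x1 x3 KK LL
    ring
  have hG : (fun w => (2 * J3 w + c + b * x1 w)
        * Real.sqrt (J1 w ^ 2 + J2 w ^ 2 + J3 w ^ 2 + a / x3 w ^ 2))
      = fun w => ff b c w * √(KK a w) := by
    funext w
    rw [JJ]
    unfold J3 x1 x3 KK ff
    rw [neg_sq]
    ring
  rw [hF, hG]
  have hnn : 0 ≤ (cos (z 1) / sin (z 1)) ^ 2 * z 2 ^ 2 := by positivity
  have hna : 0 ≤ a / cos (z 1) ^ 2 := by positivity
  by_cases hK : KK a z = 0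
  · have hK' := hK
    unfold KK at hK'
    have h2 : z 2 = 0 := by
      have : z 2 ^ 2 = 0 := by nlinarith [sq_nonneg (z 2), sq_nonneg (z 3)]
      simpa using this
    have h3 : z 3 = 0 := by
      have : z 3 ^ 2 = 0 := by nlinarith [sq_nonneg (z 2), sq_nonneg (z 3)]
      simpa using this
    have h4 : a = 0 := by
      have : a / cos (z 1) ^ 2 = 0 := by nlinarith [sq_nonneg (z 2), sq_nonneg (z 3)]
      simpa [hc] using this
    unfold pb
    rw [pd_zero 0 (fun w => KK a w + LL b c w) z, pd_zero 1 (fun w => KK a w + LL b c w) z,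
      pd_zero 0 (fun w => ff b c w * √(KK a w)) z, pd_zero 1 (fun w => ff b c w * √(KK a w)) z]
    · ring
    all_goals
      intro t
      simp [KK, LL, Function.update, h2, h3, h4]
  · have hpos : 0 < KK a z := by
      refine lt_of_le_of_ne ?_ (Ne.symm hK)
      unfold KK
      positivity
    unfold pb
    simp only [pdF a b c z hs hc, pdG a b c z hs hc hK, pK0 a z hs hc, pf2, pf3, pf0, pf1]
    exact alg a b c (sin (z 0)) (cos (z 0)) (sin (z 1)) (cos (z 1)) (z 2) (z 3) (√(KK a z)) hs hc
      (Real.sqrt_ne_zero'.2 hpos) (sin_sq_add_cos_sq _) (Real.sq_sqrt hpos.le)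
      _ _ _ _ _ _ _ _ rfl (pK1 a z hs hc) (pK2 a z hs hc) (pK3 a z hs hc)
      (pL0 b c z hs) (pL1 b c z hs) (pL2 b c z hs) (pL3 b c z hs)
end
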